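/- There exists a function f : ℕ³ → ℕ such that for all integers d, ℓ, p and every graph G of distance VC-dimension at most d, at least one of the following holds: (a) G contains a d-localized set of size p which is d-sparse; (b) the B_ℓ-hypergraph of G satisfies the (f(ν_ℓ, d, p), d+1)-property. -/

import Mathlib

open SimpleGraph

/-- The ball of center `v` and radius `k` in a graph. -/
def gball {V : Type*} (G : SimpleGraph V) (v : V) (k : ℕ) : Set V :=
  {w | G.edist v w ≤ (k : ℕ∞)}

/-- `X` is shattered by the B-hypergraph of `G` (hyperedges: all balls of all radii). -/
def BShattered {V : Type*} (G : SimpleGraph V) (X : Set V) : Prop :=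
  ∀ Y ⊆ X, ∃ (v : V) (k : ℕ), gball G v k ∩ X = Y

/-- The distance VC-dimension of `G` is at most `d`. -/
def distVCdimLE {V : Type*} (G : SimpleGraph V) (d : ℕ) : Prop :=
  ∀ (S : Set V) (X : Set S), BShattered (G.induce S) X → X.ncard ≤ d

/-- Packing number of the `B_ℓ`-hypergraph: maximum number of pairwise disjoint balls of radius ℓ. -/
noncomputable def packingNumber {V : Type*} [Fintype V] (G : SimpleGraph V) (ℓ : ℕ) : ℕ :=
  sSup {n | ∃ C : Finset V, C.card = n ∧
    (C : Set V).Pairwise fun u w => Disjoint (gball G u ℓ) (gball G w ℓ)}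

/-- A set `X` of centers is `q`-sparse (for radius `ℓ`): no vertex of `G` belongs to more than
`q` balls of radius `ℓ` centered at vertices of `X`. -/
def QSparse {V : Type*} (G : SimpleGraph V) (ℓ : ℕ) (X : Finset V) (q : ℕ) : Prop :=
  ∀ v : V, {x : V | x ∈ X ∧ v ∈ gball G x ℓ}.ncard ≤ q

/-- A set `X` is `d`-localized (for radius `ℓ`): its vertices are pairwise at distance at
least `ℓ+1` and at most `2ℓ - 2^{d+2} - 3`. -/
def DLocalizedSet {V : Type*} (G : SimpleGraph V) (ℓ d : ℕ) (X : Finset V) : Prop :=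
  ∀ x ∈ X, ∀ y ∈ X, x ≠ y →
    ((ℓ : ℕ∞) + 1 ≤ G.edist x y ∧ G.edist x y + 2 ^ (d + 2) + 3 ≤ 2 * ℓ)

/-!
Let `C` be a large set of centres such that no vertex lies in `d + 1` of the balls, and colour
the pairs of `C` by their distance: at most `ℓ`, more than `2ℓ`, admissible in a localized set, or
one of the remaining `2 ^ (d + 2) + 3` values. By Ramsey's theorem some colour has a large
monochromatic set. In the first colour each of its vertices lies in all of its balls, so it has at
most `d` elements; in the second its balls are disjoint; the third gives the localized set.

In the remaining case all its distances equal some `r ≤ 2ℓ`, where we may assume `ℓ < r`. The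
midpoint of a geodesic between two of its points is within `ℓ` of at most `d` of its points, so one
can choose `d + 1` points `a` and `2 ^ (d + 1)` points `y` among them such that the midpoint of the
geodesic from `y` to `a` is close to no other chosen `y` and to no other chosen `a`. In a union of
such geodesics, a walk of length at most `r` from `y` to `a` has to pass through one of these
midpoints halfway, hence through that of the geodesic from `y` to `a`. Keeping only the geodesics
from `y` to the points of a set attached to `y` therefore makes the ball of radius `r` around `y`
cut out exactly this set, so the points `a` are shattered in an induced subgraph.
-/

open Finset

section Combinatorics

variable {α β κ : Type*}

/-- An upper bound for the `q`-colour Ramsey numbers of cliques whose prescribed sizes add up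
to `s`, obtained by passing to a majority colour at one vertex after another. -/
def ramseyBound (q s : ℕ) : ℕ :=
  (fun N ↦ q * N + 1)^[s] 0

theorem exists_subset_pairwise_le_sum_card [Fintype κ] [Nonempty κ] (R : κ → α → α → Prop)
    [∀ i, Std.Symm (R i)] {s : ℕ} {X : Finset α}
    (hR : (X : Set α).Pairwise fun x y ↦ ∃ i, R i x y)
    (hX : ramseyBound (Fintype.card κ) s ≤ #X) :
    ∃ T : κ → Finset α,
      (∀ i, T i ⊆ X ∧ (T i : Set α).Pairwise (R i)) ∧ s ≤ ∑ i, #(T i) := by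
  classical
  induction s generalizing X with
  | zero => exact ⟨fun _ ↦ ∅, by simp, by simp⟩
  | succ s ih =>
    rw [ramseyBound, Function.iterate_succ_apply'] at hX
    obtain ⟨x, hx⟩ : X.Nonempty := card_pos.mp (by lia)
    have hcolour : ∀ y ∈ X.erase x, ∃ i, R i x y := fun y hy ↦
      hR hx (mem_of_mem_erase hy) (ne_of_mem_erase hy).symm
    choose! colour hcolour using hcolour
    obtain ⟨i, -, hi⟩ := exists_le_card_fiber_of_mul_le_card_of_maps_to (f := colour)
      (fun y (_ : y ∈ X.erase x) ↦ mem_univ _) univ_nonempty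
      (by rw [card_univ, card_erase_of_mem hx]; exact Nat.le_sub_one_of_lt hX)
    set Xᵢ := {y ∈ X.erase x | colour y = i} with hXᵢ
    have hXᵢX : Xᵢ ⊆ X := (filter_subset _ _).trans (erase_subset _ _)
    obtain ⟨T, hT, hsum⟩ := ih (hR.mono (coe_subset.mpr hXᵢX)) hi
    have hxT : x ∉ T i := fun h ↦ by simpa [hXᵢ] using (hT i).1 h
    have hxR : ∀ y ∈ T i, R i x y := fun y hy ↦ by
      obtain ⟨hyX, rfl⟩ := mem_filter.mp ((hT i).1 hy)
      exact hcolour y hyX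
    refine ⟨Function.update T i (insert x (T i)), ?_, hsum.trans_lt <|
      sum_lt_sum (fun j _ ↦ card_le_card <|
        le_update_self_iff.mpr (subset_insert x (T i)) j) ⟨i, mem_univ i, by simp [hxT]⟩⟩
    rw [Function.forall_update_iff T fun j S ↦ S ⊆ X ∧ (S : Set α).Pairwise (R j), coe_insert,
      Set.pairwise_insert_of_symm]
    exact ⟨⟨insert_subset hx ((hT i).1.trans hXᵢX), (hT i).2, fun y hy _ ↦ hxR y hy⟩,
      fun j _ ↦ ⟨(hT j).1.trans hXᵢX, (hT j).2⟩⟩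

theorem exists_monochromatic_subset [Fintype κ] [Nonempty κ] (R : κ → α → α → Prop)
    [∀ i, Std.Symm (R i)] (n : κ → ℕ) {X : Finset α}
    (hR : (X : Set α).Pairwise fun x y ↦ ∃ i, R i x y)
    (hX : ramseyBound (Fintype.card κ) (∑ i, n i) ≤ #X) :
    ∃ i, ∃ T ⊆ X, #T = n i ∧ (T : Set α).Pairwise (R i) := by
  obtain ⟨T, hT, hsum⟩ := exists_subset_pairwise_le_sum_card R hR hX
  obtain ⟨i, -, hi⟩ := exists_le_of_sum_le univ_nonempty hsum
  obtain ⟨U, hUT, hU⟩ := exists_subset_card_eq hi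
  exact ⟨i, U, hUT.trans (hT i).1, hU, (hT i).2.mono (coe_subset.mpr hUT)⟩

theorem exists_card_filter_swap_le (R : α → α → Prop) [DecidableRel R] {k : ℕ} {X : Finset α}
    (hX : X.Nonempty) (hR : ∀ x ∈ X, #{y ∈ X | R x y} ≤ k) :
    ∃ x ∈ X, #{y ∈ X | R y x} ≤ k := by
  refine exists_le_of_sum_le hX ?_
  calc ∑ x ∈ X, #{y ∈ X | R y x} = ∑ x ∈ X, #{y ∈ X | R x y} :=
        (sum_card_bipartiteAbove_eq_sum_card_bipartiteBelow R).symm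
    _ ≤ ∑ _x ∈ X, k := sum_le_sum hR

theorem exists_subset_pairwise_not (R : α → α → Prop) [DecidableRel R] {k n : ℕ} {X : Finset α}
    (hR : ∀ x ∈ X, #{y ∈ X | R x y} ≤ k) (hX : (2 * k + 1) * n ≤ #X) :
    ∃ T ⊆ X, #T = n ∧ (T : Set α).Pairwise fun x y ↦ ¬ R x y := by
  classical
  induction n generalizing X with
  | zero => exact ⟨∅, by simp⟩
  | succ n ih =>
    rw [mul_add_one] at hX
    obtain ⟨x, hx, hxin⟩ := exists_card_filter_swap_le R (card_pos.mp (by lia)) hR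
    set N := insert x ({y ∈ X | R x y} ∪ {y ∈ X | R y x}) with hN
    have hNcard : #N ≤ 2 * k + 1 := by
      grw [hN, card_insert_le, card_union_le, hR x hx, hxin, two_mul]
    obtain ⟨T, hT, hTcard, hTind⟩ := ih (X := X \ N)
      (fun y hy ↦ (card_le_card (filter_subset_filter _ sdiff_subset)).trans
        (hR y (mem_sdiff.mp hy).1))
      (by have := le_card_sdiff N X; lia)
    have hxT : ∀ y ∈ T, y ≠ x ∧ ¬ R x y ∧ ¬ R y x := fun y hy ↦ by
      have := mem_sdiff.mp (hT hy)
      simp only [hN, mem_insert, mem_union, mem_filter] at this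
      tauto
    refine ⟨insert x T, insert_subset hx (hT.trans sdiff_subset), ?_, ?_⟩
    · rw [card_insert_of_notMem fun h ↦ (hxT x h).1 rfl, hTcard]
    · rw [coe_insert, Set.pairwise_insert]
      exact ⟨hTind, fun y hy _ ↦ (hxT y hy).2⟩

theorem exists_subset_pairwise_notMem (s : β → α → Finset α) {k m n : ℕ}
    (hs : ∀ b a, #(s b a) ≤ k) {B : Finset α} {Y : Finset β}
    (hB : (2 * k + 1) * m ≤ #B) (hY : (#B).choose m * n ≤ #Y) :
    ∃ A ⊆ B, #A = m ∧ ∃ Z ⊆ Y, n ≤ #Z ∧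
      ∀ z ∈ Z, (A : Set α).Pairwise fun a a' ↦ a' ∉ s z a := by
  classical
  have hindep (y : β) : ∃ A ⊆ B, #A = m ∧ (A : Set α).Pairwise fun a a' ↦ a' ∉ s y a :=
    exists_subset_pairwise_not (fun a a' ↦ a' ∈ s y a) (fun a _ ↦
      (card_le_card fun _ h ↦ (mem_filter.mp h).2).trans (hs y a)) hB
  choose A hAB hAcard hA using hindep
  have hAmem : ∀ y ∈ Y, A y ∈ B.powersetCard m := fun y _ ↦
    mem_powersetCard.mpr ⟨hAB y, hAcard y⟩
  obtain ⟨A₀, hA₀, hfiber⟩ := exists_le_card_fiber_of_mul_le_card_of_maps_to hAmem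
    (powersetCard_nonempty.mpr ((Nat.le_mul_of_pos_left m (by lia)).trans hB))
    (by rwa [card_powersetCard])
  obtain ⟨hA₀B, hA₀card⟩ := mem_powersetCard.mp hA₀
  refine ⟨A₀, hA₀B, hA₀card, {y ∈ Y | A y = A₀}, filter_subset _ _, hfiber, fun z hz ↦ ?_⟩
  obtain ⟨-, rfl⟩ := mem_filter.mp hz
  exact hA z

/-- The number of points from which `exists_disjoint_private_subsets` selects its two sets, of
sizes `m` and `n`, when the sets to be avoided have at most `k` elements. -/
def selectionBound (k m n : ℕ) : ℕ :=
  (2 * k + 1) * m + ((2 * k + 1) * m).choose m * ((2 * (m * k) + 1) * n)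

theorem exists_disjoint_private_subsets (s : α → α → Finset α) {k m n : ℕ}
    (hs : ∀ y a, #(s y a) ≤ k) {X : Finset α} (hX : selectionBound k m n ≤ #X) :
    ∃ A ⊆ X, ∃ Y ⊆ X, Disjoint A Y ∧ #A = m ∧ #Y = n ∧
      ∀ y ∈ Y, ∀ a ∈ A, (∀ y' ∈ Y, y' ∈ s y a → y' = y) ∧ (∀ a' ∈ A, a' ∈ s y a → a' = a) := by
  classical
  unfold selectionBound at hX
  obtain ⟨B, hBX, hB⟩ := exists_subset_card_eq ((Nat.le_add_right _ _).trans hX)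
  obtain ⟨A, hAB, hAcard, Z, hZ, hZcard, hA⟩ := exists_subset_pairwise_notMem s hs
    (m := m) (n := (2 * (m * k) + 1) * n) (Y := X \ B) hB.ge
    (by rw [card_sdiff_of_subset hBX, hB]; lia)
  obtain ⟨Y, hYZ, hYcard, hY⟩ := exists_subset_pairwise_not
    (fun y y' ↦ y' ∈ A.biUnion (s y)) (k := m * k) (fun y _ ↦
      (card_le_card fun _ h ↦ (mem_filter.mp h).2).trans
        (hAcard ▸ card_biUnion_le_card_mul A (s y) k fun a _ ↦ hs y a)) hZcard
  have hYXB : Y ⊆ X \ B := hYZ.trans hZ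
  refine ⟨A, hAB.trans hBX, Y, hYXB.trans sdiff_subset,
    (disjoint_sdiff.mono_left hAB).mono_right hYXB, hAcard, hYcard,
    fun y hy a ha ↦ ⟨fun y' hy' hmem ↦ ?_, fun a' ha' hmem ↦ ?_⟩⟩
  · by_contra hne
    exact hY hy hy' (Ne.symm hne) (mem_biUnion.mpr ⟨a, ha, hmem⟩)
  · by_contra hne
    exact hA y (hYZ hy) ha ha' (Ne.symm hne) hmem

end Combinatorics

section Walks

variable {V W : Type*} {G : SimpleGraph V} {H : SimpleGraph W} {u v u' v' z : V} {m n k r : ℕ}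

theorem edist_map_le_edist (f : G →g H) (u v : V) : H.edist (f u) (f v) ≤ G.edist u v :=
  le_iInf fun p ↦ (edist_le (p.map f)).trans_eq (by rw [Walk.length_map])

theorem edist_induce_le_length {S : Set V} (p : G.Walk u v) (hp : ∀ x ∈ p.support, x ∈ S) :
    (G.induce S).edist ⟨u, hp u p.start_mem_support⟩ ⟨v, hp v p.end_mem_support⟩ ≤ p.length := by
  refine (edist_le (p.induce S hp)).trans_eq ?_
  rw [← Walk.length_map (Embedding.induce S).toHom, Walk.map_induce]
  rfl

theorem edist_getVert_le (p : G.Walk u v) (k : ℕ) : G.edist u (p.getVert k) ≤ k :=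
  (edist_le (p.take k)).trans (by rw [Walk.take_length]; exact_mod_cast min_le_left _ _)

theorem getVert_edist_le (p : G.Walk u v) (k : ℕ) :
    G.edist (p.getVert k) v ≤ (p.length - k : ℕ) :=
  (edist_le (p.drop k)).trans_eq (by rw [Walk.drop_length])

theorem exists_edist_le_of_edist_le_add (h : G.edist u v ≤ (m + n : ℕ)) :
    ∃ z, G.edist u z ≤ m ∧ G.edist z v ≤ n := by
  obtain ⟨p, hp⟩ := exists_walk_of_edist_ne_top (ne_top_of_le_ne_top (ENat.natCast_ne_top _) h)
  rw [← hp] at h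
  have hlen : p.length ≤ m + n := by exact_mod_cast h
  refine ⟨p.getVert m, edist_getVert_le p m, (getVert_edist_le p m).trans ?_⟩
  exact_mod_cast Nat.sub_le_iff_le_add'.mpr hlen

theorem le_add_of_edist_le (h : (r : ℕ∞) ≤ G.edist u v) (hu : G.edist u z ≤ m)
    (hv : G.edist z v ≤ n) : r ≤ m + n := by
  exact_mod_cast h.trans (SimpleGraph.edist_triangle.trans (add_le_add hu hv))

theorem eq_getVert_of_mem_support {p : G.Walk u v} (hp : p.length = r) (hkr : k ≤ r)
    (hz : z ∈ p.support) (hu'v : (r : ℕ∞) ≤ G.edist u' v) (huv' : (r : ℕ∞) ≤ G.edist u v')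
    (hu'z : G.edist u' z ≤ k) (hzv' : G.edist z v' ≤ (r - k : ℕ)) : z = p.getVert k := by
  obtain ⟨j, rfl, hj⟩ := Walk.mem_support_iff_exists_getVert.mp hz
  have hkj : r ≤ k + (p.length - j) := le_add_of_edist_le hu'v hu'z (getVert_edist_le p j)
  have hjk : r ≤ j + (r - k) := le_add_of_edist_le huv' (edist_getVert_le p j) hzv'
  rw [show j = k by lia]

end Walks

section Shattering

variable {V ι κ : Type*} {G : SimpleGraph V} {y : ι → V} {a : κ → V} {r k d : ℕ}

/-- The vertices `y i` and `a j` together with those of the walks `P i j` with `E i j`. The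
subgraph they induce is meant to have `y i` and `a j` at distance at most `r` exactly when
`E i j` holds. -/
def walkUnion (P : ∀ i j, G.Walk (y i) (a j)) (E : ι → κ → Prop) : Set V :=
  Set.range y ∪ Set.range a ∪ {v | ∃ i j, E i j ∧ v ∈ (P i j).support}

theorem source_mem_walkUnion (P : ∀ i j, G.Walk (y i) (a j)) (E : ι → κ → Prop) (i : ι) :
    y i ∈ walkUnion P E :=
  Or.inl (Or.inl ⟨i, rfl⟩)

theorem target_mem_walkUnion (P : ∀ i j, G.Walk (y i) (a j)) (E : ι → κ → Prop) (j : κ) :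
    a j ∈ walkUnion P E :=
  Or.inl (Or.inr ⟨j, rfl⟩)

/-- The walks `P i j` from `y i` to `a j` are geodesics of length `r` whose vertices at
position `k` identify them: among the `y`s only `y i`, and among the `a`s only `a j`, is as close
to that vertex of `P i j` as the ends of the walk are. -/
structure HasPrivateVertices (P : ∀ i j, G.Walk (y i) (a j)) (r k : ℕ) : Prop where
  length_eq : ∀ i j, (P i j).length = r
  le_edist : ∀ i j, (r : ℕ∞) ≤ G.edist (y i) (a j)
  lt_edist : Pairwise fun i i' ↦ (k : ℕ∞) < G.edist (y i) (y i')
  eq_source : ∀ i j i', G.edist (y i') ((P i j).getVert k) ≤ k → i' = i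
  eq_target : ∀ i j j', G.edist ((P i j).getVert k) (a j') ≤ (r - k : ℕ) → j' = j

namespace HasPrivateVertices

variable {P : ∀ i j, G.Walk (y i) (a j)}

theorem injective_target [Nonempty ι] (hP : HasPrivateVertices P r k) :
    Function.Injective a := by
  intro j j' hjj'
  obtain ⟨i⟩ := ‹Nonempty ι›
  refine hP.eq_target i j' j ?_
  rw [hjj', ← hP.length_eq i j']
  exact getVert_edist_le _ _

theorem edist_induce_walkUnion_le_iff (hP : HasPrivateVertices P r k) (hk : 0 < k) (hkr : k < r)
    {E : ι → κ → Prop} {i : ι} {j : κ} :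
    (G.induce (walkUnion P E)).edist ⟨y i, source_mem_walkUnion P E i⟩
      ⟨a j, target_mem_walkUnion P E j⟩ ≤ r ↔ E i j := by
  refine ⟨fun h ↦ ?_, fun h ↦ hP.length_eq i j ▸
    edist_induce_le_length (P i j) fun x hx ↦ Or.inr ⟨i, j, h, hx⟩⟩
  rw [← Nat.add_sub_cancel' hkr.le] at h
  obtain ⟨⟨z, hz⟩, hyz, hza⟩ := exists_edist_le_of_edist_le_add h
  replace hyz : G.edist (y i) z ≤ k := (edist_map_le_edist (Embedding.induce _).toHom _ _).trans hyz
  replace hza : G.edist z (a j) ≤ (r - k : ℕ) :=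
    (edist_map_le_edist (Embedding.induce _).toHom _ _).trans hza
  obtain (⟨i', rfl⟩ | ⟨j', rfl⟩) | ⟨i', j', hE, hzP⟩ := hz
  · obtain rfl : i = i' := by
      by_contra hne
      exact (hP.lt_edist hne).not_ge hyz
    have : r ≤ r - k := by exact_mod_cast (hP.le_edist i j).trans hza
    lia
  · have : r ≤ k := by exact_mod_cast (hP.le_edist i j').trans hyz
    lia
  · have hzk := eq_getVert_of_mem_support (hP.length_eq i' j') hkr.le hzP (hP.le_edist i j')
      (hP.le_edist i' j) hyz hza
    obtain rfl := hP.eq_source i' j' i (hzk ▸ hyz)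
    obtain rfl := hP.eq_target i j' j (hzk ▸ hza)
    exact hE

theorem card_le_of_distVCdimLE {y : Set κ → V} {P : ∀ s j, G.Walk (y s) (a j)}
    (hP : HasPrivateVertices P r k) (hk : 0 < k) (hkr : k < r) (hG : distVCdimLE G d) :
    Nat.card κ ≤ d := by
  let S : Set V := walkUnion P fun s j ↦ j ∈ s
  let target (j : κ) : S := ⟨a j, target_mem_walkUnion P _ j⟩
  have htarget : Function.Injective target := fun j j' h ↦
    hP.injective_target (congrArg Subtype.val h)
  have hshattered : BShattered (G.induce S) (Set.range target) := by
    intro Z hZ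
    refine ⟨⟨y (target ⁻¹' Z), source_mem_walkUnion P _ _⟩, r, ?_⟩
    have hball : target ⁻¹' gball (G.induce S) ⟨y (target ⁻¹' Z), _⟩ r = target ⁻¹' Z :=
      Set.ext fun j ↦ hP.edist_induce_walkUnion_le_iff hk hkr
    rw [← Set.image_preimage_eq_inter_range, hball, Set.image_preimage_eq_of_subset hZ]
  exact (Set.ncard_range_of_injective htarget).symm.trans_le (hG S _ hshattered)

end HasPrivateVertices

end Shattering

section Sparse

variable {V : Type*} {G : SimpleGraph V} {X Y : Finset V} {d q r ℓ : ℕ}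

theorem mem_gball {v w : V} : w ∈ gball G v ℓ ↔ G.edist v w ≤ ℓ :=
  Iff.rfl

theorem disjoint_gball_of_lt_edist {u v : V} (h : (2 * ℓ : ℕ) < G.edist u v) :
    Disjoint (gball G u ℓ) (gball G v ℓ) := by
  refine Set.disjoint_left.mpr fun z hu hv ↦ h.not_ge ?_
  rw [mem_gball, SimpleGraph.edist_comm] at hv
  calc G.edist u v ≤ G.edist u z + G.edist z v := SimpleGraph.edist_triangle
    _ ≤ ℓ + ℓ := add_le_add hu hv
    _ = (2 * ℓ : ℕ) := by push_cast; ring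

namespace QSparse

theorem subset (hY : QSparse G ℓ Y q) (h : X ⊆ Y) : QSparse G ℓ X q := by
  refine fun v ↦ (Set.ncard_le_ncard (fun x hx ↦ ?_) ?_).trans (hY v)
  · exact ⟨h hx.1, hx.2⟩
  · exact Y.finite_toSet.subset fun x hx ↦ hx.1

theorem card_filter_le (hX : QSparse G ℓ X q) (v : V)
    [DecidablePred fun x : X ↦ v ∈ gball G (x : V) ℓ] :
    #{x : X | v ∈ gball G (x : V) ℓ} ≤ q := by
  convert hX v
  rw [← Set.ncard_coe_finset, ← Set.ncard_image_of_injective _ Subtype.val_injective]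
  congr 1
  ext x
  simp [and_comm]

theorem card_le_of_pairwise_edist_le (hX : QSparse G ℓ X q)
    (h : (X : Set V).Pairwise fun x y ↦ G.edist x y ≤ ℓ) : #X ≤ q := by
  obtain rfl | ⟨v, hv⟩ := X.eq_empty_or_nonempty
  · simp
  have hball : {x | x ∈ X ∧ v ∈ gball G x ℓ} = X := by
    refine Set.ext fun x ↦ and_iff_left_of_imp fun hx ↦ mem_gball.mpr ?_
    obtain rfl | hne := eq_or_ne x v
    · simp
    · exact h hx hv hne
  simpa [hball] using hX v

end QSparse

/-- The size from which a `d`-sparse set with all distances equal to some `r ≤ 2 * ℓ` forces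
distance VC-dimension more than `d`. -/
def equidistantBound (d : ℕ) : ℕ :=
  selectionBound d (d + 1) (2 ^ (d + 1))

theorem lt_equidistantBound (d : ℕ) : d < equidistantBound d := by
  calc d < (2 * d + 1) * (d + 1) := by nlinarith
    _ ≤ equidistantBound d := Nat.le_add_right _ _

namespace QSparse

theorem exists_hasPrivateVertices (hX : QSparse G ℓ X d)
    (hdist : (X : Set V).Pairwise fun x y ↦ G.edist x y = r) (hr : 0 < r) (hrℓ : r ≤ 2 * ℓ)
    (hcard : equidistantBound d ≤ #X) :
    ∃ (A : Finset X) (y : Set A → V) (P : ∀ s (j : A), G.Walk (y s) (j : X)),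
      #A = d + 1 ∧ HasPrivateVertices P r (r / 2) := by
  classical
  replace hdist (x x' : X) (h : x ≠ x') : G.edist x x' = r :=
    hdist x.2 x'.2 (Subtype.coe_injective.ne h)
  have hwalk (x x' : X) : ∃ p : G.Walk x x', x ≠ x' → p.length = r := by
    obtain rfl | hne := eq_or_ne x x'
    · exact ⟨.nil, fun h ↦ absurd rfl h⟩
    · exact (exists_walk_of_edist_eq_coe (hdist x x' hne)).imp fun _ hp _ ↦ hp
  choose P hP using hwalk
  obtain ⟨A, -, Y, -, hAY, hA, hY, hprivate⟩ := exists_disjoint_private_subsets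
    (fun y a ↦ ({x | (P y a).getVert (r / 2) ∈ gball G (x : V) ℓ} : Finset X))
    (fun y a ↦ hX.card_filter_le _) (X := univ)
    (hcard.trans_eq (by simp))
  simp only [mem_filter_univ, mem_gball] at hprivate
  obtain ⟨e⟩ : Nonempty (Set A ≃ Y) := Fintype.card_eq.mp (by simp [hA, hY])
  have hne (s : Set A) (j : A) : (e s : X) ≠ j := fun h ↦
    disjoint_left.mp hAY j.2 (h ▸ (e s).2)
  refine ⟨A, fun s ↦ (e s : X), fun s j ↦ P (e s) j, hA, ?_⟩
  constructor
  · exact fun s j ↦ hP _ _ (hne s j)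
  · exact fun s j ↦ (hdist _ _ (hne s j)).ge
  · intro s s' hs
    rw [hdist _ _ (Subtype.coe_injective.ne (e.injective.ne hs))]
    exact_mod_cast Nat.div_lt_self hr one_lt_two
  · intro s j s' h
    exact e.injective <| Subtype.ext <| (hprivate (e s) (e s).2 j j.2).1 (e s') (e s').2 <|
      h.trans (by exact_mod_cast (by lia : r / 2 ≤ ℓ))
  · intro s j j' h
    rw [SimpleGraph.edist_comm] at h
    exact Subtype.ext <| (hprivate (e s) (e s).2 j j.2).2 j' j'.2 <|
      h.trans (by exact_mod_cast (by lia : r - r / 2 ≤ ℓ))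

theorem card_lt_equidistantBound (hX : QSparse G ℓ X d) (hG : distVCdimLE G d)
    (hdist : (X : Set V).Pairwise fun x y ↦ G.edist x y = r) (hrℓ : r ≤ 2 * ℓ) :
    #X < equidistantBound d := by
  by_contra! hcard
  obtain hle | hlt := le_or_gt r ℓ
  · have hclose : (X : Set V).Pairwise fun x y ↦ G.edist x y ≤ ℓ :=
      hdist.imp fun _ _ h ↦ h.trans_le (by exact_mod_cast hle)
    exact ((lt_equidistantBound d).trans_le hcard).not_ge
      (hX.card_le_of_pairwise_edist_le hclose)
  · obtain ⟨A, y, P, hA, hP⟩ := hX.exists_hasPrivateVertices hdist (by lia) hrℓ hcard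
    have : Nat.card A ≤ d := hP.card_le_of_distVCdimLE (by lia) (by lia) hG
    simp [hA] at this

end QSparse

end Sparse

section Distances

variable {V : Type*} {G : SimpleGraph V} {d ℓ p ν : ℕ}

/-- The colours of the Ramsey argument: a pair of vertices is `close` if their distance is at
most `ℓ`, `far` if it exceeds `2 * ℓ`, `localized` if it is admissible in a `d`-localized set,
and of colour `gap t` if it equals `2 * ℓ - t`. -/
inductive DistanceClass (d : ℕ)
  | close
  | far
  | localized
  | gap (t : Fin (2 ^ (d + 2) + 3))
  deriving Fintype

namespace DistanceClass

/-- The relation between two vertices expressed by a colour. -/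
def Rel (G : SimpleGraph V) (ℓ : ℕ) : DistanceClass d → V → V → Prop
  | close, x, y => G.edist x y ≤ ℓ
  | far, x, y => (2 * ℓ : ℕ) < G.edist x y
  | localized, x, y => (ℓ : ℕ∞) + 1 ≤ G.edist x y ∧ G.edist x y + 2 ^ (d + 2) + 3 ≤ 2 * ℓ
  | gap t, x, y => G.edist x y = (2 * ℓ - t : ℕ)

instance (c : DistanceClass d) : Std.Symm (c.Rel G ℓ) where
  symm x y h := by cases c <;> simpa only [Rel, SimpleGraph.edist_comm] using h

instance : Nonempty (DistanceClass d) :=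
  ⟨close⟩

theorem exists_rel (G : SimpleGraph V) (d ℓ : ℕ) (x y : V) :
    ∃ c : DistanceClass d, c.Rel G ℓ x y := by
  by_cases hclose : G.edist x y ≤ ℓ
  · exact ⟨close, hclose⟩
  by_cases hfar : (2 * ℓ : ℕ) < G.edist x y
  · exact ⟨far, hfar⟩
  by_cases hloc : G.edist x y + 2 ^ (d + 2) + 3 ≤ 2 * ℓ
  · exact ⟨localized, Order.add_one_le_of_lt (not_le.mp hclose), hloc⟩
  obtain ⟨D, hD⟩ := ENat.ne_top_iff_exists.mp
    (ne_top_of_le_ne_top (ENat.natCast_ne_top _) (not_lt.mp hfar))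
  rw [← hD] at hfar hloc
  have hDℓ : D ≤ 2 * ℓ := by exact_mod_cast not_lt.mp hfar
  have hgap : 2 * ℓ < D + 2 ^ (d + 2) + 3 := by exact_mod_cast not_le.mp hloc
  refine ⟨gap ⟨2 * ℓ - D, by lia⟩, ?_⟩
  rw [Rel, ← hD, Nat.sub_sub_self hDℓ]

/-- Sizes that a monochromatic subset of a `d`-sparse set cannot have, for packing number at most
`ν` and when no localized set of size `p` is available. -/
def cliqueSize (ν p : ℕ) : DistanceClass d → ℕ
  | close => d + 1
  | far => ν + 1
  | localized => p
  | gap _ => equidistantBound d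

end DistanceClass

/-- The function `f(ν, d, p)` of the theorem. -/
def intersectionBound (ν d p : ℕ) : ℕ :=
  ramseyBound (Fintype.card (DistanceClass d)) (∑ c : DistanceClass d, c.cliqueSize ν p)

theorem QSparse.exists_dLocalizedSet_subset {C : Finset V} (hC : QSparse G ℓ C d)
    (hG : distVCdimLE G d)
    (hν : ∀ T : Finset V,
      (T : Set V).Pairwise (fun u w ↦ Disjoint (gball G u ℓ) (gball G w ℓ)) → #T ≤ ν)
    (hcard : intersectionBound ν d p ≤ #C) :
    ∃ X ⊆ C, #X = p ∧ DLocalizedSet G ℓ d X := by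
  obtain ⟨c, T, hTC, hTcard, hT⟩ := exists_monochromatic_subset
    (fun c : DistanceClass d ↦ c.Rel G ℓ) (DistanceClass.cliqueSize ν p)
    (fun x _ y _ _ ↦ DistanceClass.exists_rel G d ℓ x y) hcard
  replace hC := hC.subset hTC
  cases c with
  | close =>
    have hTd : #T ≤ d := hC.card_le_of_pairwise_edist_le hT
    exact absurd hTcard (Nat.lt_succ_of_le hTd).ne
  | far =>
    have hTν : #T ≤ ν := hν T (hT.imp fun _ _ ↦ disjoint_gball_of_lt_edist)
    exact absurd hTcard (Nat.lt_succ_of_le hTν).ne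
  | localized => exact ⟨T, hTC, hTcard, fun x hx y hy hxy ↦ hT hx hy hxy⟩
  | gap t => exact absurd hTcard (hC.card_lt_equidistantBound hG hT (Nat.sub_le _ _)).ne

theorem card_le_packingNumber [Fintype V] {T : Finset V}
    (hT : (T : Set V).Pairwise fun u w ↦ Disjoint (gball G u ℓ) (gball G w ℓ)) :
    #T ≤ packingNumber G ℓ :=
  le_csSup ⟨Fintype.card V, by rintro _ ⟨C, rfl, -⟩; exact card_le_univ C⟩ ⟨T, rfl, hT⟩

theorem stmt12_general (hG : distVCdimLE G d)
    (hν : ∀ T : Finset V,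
      (T : Set V).Pairwise (fun u w ↦ Disjoint (gball G u ℓ) (gball G w ℓ)) → #T ≤ ν) :
    (∃ X : Finset V, #X = p ∧ DLocalizedSet G ℓ d X ∧ QSparse G ℓ X d) ∨
      ∀ C : Finset V, intersectionBound ν d p ≤ #C →
        ∃ v : V, d + 1 ≤ {c : V | c ∈ C ∧ v ∈ gball G c ℓ}.ncard := by
  refine or_iff_not_imp_right.mpr fun h ↦ ?_
  push Not at h
  obtain ⟨C, hcard, hC⟩ := h
  replace hC : QSparse G ℓ C d := fun v ↦ Nat.le_of_lt_succ (hC v)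
  obtain ⟨X, hXC, hX, hloc⟩ := hC.exists_dLocalizedSet_subset hG hν hcard
  exact ⟨X, hX, hloc, hC.subset hXC⟩

end Distances

/-- Lemma `chemincourtlong`: there is a function `f` such that for every graph
`G` of distance VC-dimension at most `d`, either `G` contains a `d`-sparse `d`-localized set of
size `p`, or the `B_ℓ`-hypergraph of `G` has the `(f(ν_ℓ, d, p), d+1)`-property. -/
theorem stmt12 :
    ∃ f : ℕ → ℕ → ℕ → ℕ,
      ∀ (d ℓ p : ℕ) (V : Type) (_ : Fintype V) (G : SimpleGraph V),
        distVCdimLE G d →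
          (∃ X : Finset V, X.card = p ∧ DLocalizedSet G ℓ d X ∧ QSparse G ℓ X d) ∨
          (∀ C : Finset V, C.card = f (packingNumber G ℓ) d p →
            ∃ v : V, d + 1 ≤ {c : V | c ∈ C ∧ v ∈ gball G c ℓ}.ncard) := by
  exact ⟨intersectionBound, fun d ℓ p V _ G hG ↦
    (stmt12_general hG fun _ ↦ card_le_packingNumber).imp_right fun h C hC ↦ h C hC.ge⟩
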